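/- Fix integers n, t, i, j with 2 ≤ t < n, i ≥ 1, j ≥ 0 and t·i + j < n. Let 𝒲 be the collection of all subsets W ⊆ ℤ/nℤ for which there exist a t-sparse set C ⊆ ℤ/nℤ with |C| = i and a set A ⊆ {c + t : c ∈ C} with |A| = j such that W = (⋃_{c ∈ C} F(c)) ∪ A. Then (n − i·t)·|𝒲| = n·C(i, j)·C(n − i·t, i). -/

import Mathlib

/-- The facet `F(i) = {i, i+1, …, i+t-1}` of the path complex `Δ_t(C_n)`
with standard labeling, vertices identified with `ℤ/nℤ`. -/
def facet (n t : ℕ) (i : ZMod n) : Finset (ZMod n) :=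
  (Finset.range t).image (fun r : ℕ => i + (r : ZMod n))

/-- A subset `C` of `ℤ/nℤ` is `t`-sparse if for every `c ∈ C` and every `1 ≤ k ≤ t`
one has `c + k ∉ C`. -/
def TSparse (n t : ℕ) (C : Finset (ZMod n)) : Prop :=
  ∀ c ∈ C, ∀ k : ℕ, 1 ≤ k → k ≤ t → c + (k : ZMod n) ∉ C

/-- `Ind(W) = {j : F(j) ⊆ W}`, the index set of the induced subcollection of
`Δ_t(C_n)` on the vertex set `W`. -/
def indSet (n t : ℕ) (W : Finset (ZMod n)) : Set (ZMod n) :=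
  {j | facet n t j ⊆ W}

/-!
The facets of a `t`-sparse set `C` are disjoint, so they leave `n - |C| t` vertices uncovered.
Cutting the cycle at an uncovered vertex turns `C` into a set of integers in `[0, n - t)` with gaps
larger than `t`, and such sets are counted by a Pascal recurrence. Double counting the pairs
(sparse set, uncovered vertex) therefore gives the number of sparse sets.

Moreover `C` can be read off from any proper `W` with `⋃ F(c) ⊆ W ⊆ ⋃ (F(c) ∪ {c + t})`: if `c`
belonged to only one of two candidates, then some `c - k` with `1 ≤ k ≤ t` would belong to only the
other one, with the whole arc between them in `W`, and walking backwards in this way would show that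
`W` is the whole cycle. So the sets `W` are counted by the pairs `(C, A)`.
-/

section SpacedSets

open Finset

/-- The linear analogue of `TSparse`: any two distinct elements of `C` differ by more than `t`. -/
def Spaced (t : ℕ) (C : Finset ℕ) : Prop :=
  ∀ a ∈ C, ∀ b ∈ C, a < b → a + t < b

open Classical in
/-- The `i`-subsets of `{0, …, m - 1}` whose elements differ pairwise by more than `t`. -/
noncomputable def spacedSets (t m i : ℕ) : Finset (Finset ℕ) :=
  {D ∈ (range m).powersetCard i | Spaced t D}

theorem mem_spacedSets {t m i : ℕ} {D : Finset ℕ} :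
    D ∈ spacedSets t m i ↔ (D ⊆ range m ∧ #D = i) ∧ Spaced t D := by
  simp only [spacedSets, mem_filter, mem_powersetCard]

theorem spaced_insert_iff {t m : ℕ} {D : Finset ℕ} (hD : D ⊆ range m) :
    Spaced t (insert m D) ↔ Spaced t D ∧ D ⊆ range (m - t) := by
  have hlt : ∀ a ∈ D, a < m := fun a ha ↦ mem_range.1 (hD ha)
  constructor
  · refine fun h ↦ ⟨fun a ha b hb ↦ h a (mem_insert_of_mem ha) b (mem_insert_of_mem hb),
      fun a ha ↦ mem_range.2 ?_⟩
    have := h a (mem_insert_of_mem ha) m (mem_insert_self m D) (hlt a ha)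
    omega
  · rintro ⟨hsp, hsub⟩ a ha b hb hab
    rcases mem_insert.1 ha with rfl | haD
    · rcases mem_insert.1 hb with rfl | hbD
      · exact absurd hab (lt_irrefl _)
      · exact absurd hab (hlt b hbD).not_gt
    · rcases mem_insert.1 hb with rfl | hbD
      · have := mem_range.1 (hsub haD)
        omega
      · exact hsp a haD b hbD hab

theorem spacedSets_succ_succ (t m i : ℕ) :
    spacedSets t (m + 1) (i + 1) =
      spacedSets t m (i + 1) ∪ (spacedSets t (m - t) i).image (insert m) := by
  classical
  have hinsert : {D ∈ (range m).powersetCard i | Spaced t (insert m D)} =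
      spacedSets t (m - t) i := by
    ext D
    rw [mem_filter, mem_powersetCard, mem_spacedSets]
    constructor
    · rintro ⟨⟨hD, hcard⟩, hsp⟩
      have := (spaced_insert_iff hD).1 hsp
      exact ⟨⟨this.2, hcard⟩, this.1⟩
    · rintro ⟨⟨hD, hcard⟩, hsp⟩
      have hDm : D ⊆ range m := hD.trans (range_mono (Nat.sub_le m t))
      exact ⟨⟨hDm, hcard⟩, (spaced_insert_iff hDm).2 ⟨hsp, hD⟩⟩
  rw [← hinsert, spacedSets, spacedSets, range_add_one, powersetCard_succ_insert notMem_range_self,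
    filter_union, filter_image]

theorem card_spacedSets_succ_succ (t m i : ℕ) :
    #(spacedSets t (m + 1) (i + 1)) = #(spacedSets t m (i + 1)) + #(spacedSets t (m - t) i) := by
  have hold : ∀ D ∈ spacedSets t m (i + 1), m ∉ D := fun D hD hm ↦
    notMem_range_self ((mem_spacedSets.1 hD).1.1 hm)
  have hnew : ∀ D ∈ spacedSets t (m - t) i, m ∉ D := fun D hD hm ↦ by
    have := mem_range.1 ((mem_spacedSets.1 hD).1.1 hm)
    omega
  rw [spacedSets_succ_succ, card_union_of_disjoint, card_image_of_injOn]
  · exact insert_erase_invOn.2.injOn.mono hnew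
  · refine disjoint_left.2 fun D hD hD' ↦ ?_
    obtain ⟨E, -, rfl⟩ := mem_image.1 hD'
    exact hold _ hD (mem_insert_self m E)

theorem card_spacedSets (t m i : ℕ) : #(spacedSets t m i) = (m + t - i * t).choose i := by
  induction m using Nat.strong_induction_on generalizing i with
  | _ m ih =>
    obtain _ | i := i
    · have : spacedSets t m 0 = {∅} := by
        ext D
        rw [mem_spacedSets, card_eq_zero, mem_singleton]
        exact ⟨fun h ↦ h.1.2, by rintro rfl; simp [Spaced]⟩
      simp [this]
    have hmul : (i + 1) * t = i * t + t := Nat.succ_mul i t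
    obtain _ | m := m
    · have : spacedSets t 0 (i + 1) = ∅ := by
        simp [spacedSets]
      rw [this, card_empty, Nat.choose_eq_zero_of_lt (by omega)]
    have hsub : (m - t + t - i * t).choose i = (m - i * t).choose i := by
      obtain rfl | hi := Nat.eq_zero_or_pos i
      · simp only [Nat.choose_zero_right]
      · have := Nat.le_mul_of_pos_left t hi
        rw [show m - t + t - i * t = m - i * t by omega]
    rw [card_spacedSets_succ_succ, ih m m.lt_succ_self, ih (m - t) (by omega), hsub, hmul,
      Nat.add_sub_add_right, Nat.add_sub_add_right]
    obtain hle | hlt := le_or_gt (i * t) m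
    · rw [Nat.sub_add_comm hle, Nat.choose_succ_succ', add_comm]
    · have hi : 0 < i := Nat.pos_of_ne_zero (by rintro rfl; omega)
      rw [Nat.sub_eq_zero_of_le hlt, Nat.sub_eq_zero_of_le hlt.le, Nat.choose_zero_succ,
        Nat.choose_eq_zero_of_lt hi]

end SpacedSets

section SparseSets

open Finset

variable {n t : ℕ} {c x : ZMod n} {C C' W : Finset (ZMod n)}

theorem mem_facet : x ∈ facet n t c ↔ ∃ r < t, c + (r : ZMod n) = x := by
  simp only [facet, mem_image, mem_range]

theorem mem_biUnion_facet :
    x ∈ C.biUnion (facet n t) ↔ ∃ c ∈ C, ∃ r < t, c + (r : ZMod n) = x := by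
  simp only [mem_biUnion, mem_facet]

theorem subset_biUnion_facet (ht : 0 < t) : C ⊆ C.biUnion (facet n t) := fun c hc ↦
  mem_biUnion_facet.2 ⟨c, hc, 0, ht, by rw [Nat.cast_zero, add_zero]⟩

theorem biUnion_facet_eq_image :
    C.biUnion (facet n t) = (C ×ˢ range t).image (fun p ↦ p.1 + (p.2 : ZMod n)) := by
  ext x
  simp only [mem_biUnion_facet, mem_image, mem_product, mem_range, Prod.exists]
  grind

theorem biUnion_facet_succ :
    C.biUnion (facet n (t + 1)) = C.biUnion (facet n t) ∪ C.image (· + (t : ZMod n)) := by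
  ext x
  simp only [mem_union, mem_biUnion_facet, mem_image, Nat.lt_succ_iff_lt_or_eq]
  grind

namespace TSparse

theorem injOn_add_natCast (hC : TSparse n t C) :
    Set.InjOn (fun p : ZMod n × ℕ ↦ p.1 + (p.2 : ZMod n)) (C ×ˢ range (t + 1) : Finset _) := by
  have h_not_lt : ∀ c ∈ C, ∀ d ∈ C, ∀ r ≤ t, ∀ s : ℕ,
      c + (r : ZMod n) = d + (s : ZMod n) → ¬s < r := by
    intro c hc d hd r hr s h hsr
    refine hC c hc (r - s) (by omega) (by omega) ?_
    rwa [Nat.cast_sub hsr.le, ← add_sub_assoc, h, add_sub_cancel_right]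
  rintro ⟨c, r⟩ hcr ⟨d, s⟩ hds (h : c + (r : ZMod n) = d + (s : ZMod n))
  obtain ⟨hc, hr⟩ := mem_product.1 hcr
  obtain ⟨hd, hs⟩ := mem_product.1 hds
  obtain rfl : r = s := le_antisymm
    (not_lt.1 (h_not_lt c hc d hd r (mem_range_succ_iff.1 hr) s h))
    (not_lt.1 (h_not_lt d hd c hc s (mem_range_succ_iff.1 hs) r h.symm))
  rw [add_right_cancel h]

theorem card_biUnion_facet (hC : TSparse n t C) : #(C.biUnion (facet n t)) = #C * t := by
  rw [biUnion_facet_eq_image, card_image_of_injOn, card_product, card_range]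
  exact hC.injOn_add_natCast.mono (mod_cast product_subset_product_right (range_mono t.le_succ))

theorem disjoint_biUnion_facet_image_add (hC : TSparse n t C) :
    Disjoint (C.biUnion (facet n t)) (C.image (· + (t : ZMod n))) := by
  refine disjoint_left.2 fun x hx hx' ↦ ?_
  obtain ⟨c, hc, r, hr, rfl⟩ := mem_biUnion_facet.1 hx
  obtain ⟨d, hd, h⟩ := mem_image.1 hx'
  have hdc : (d, t) = (c, r) := hC.injOn_add_natCast
    (mem_product.2 ⟨hd, mem_range.2 t.lt_succ_self⟩)
    (mem_product.2 ⟨hc, mem_range.2 (hr.trans t.lt_succ_self)⟩) h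
  exact hr.ne' (congrArg Prod.snd hdc)

theorem exists_mem_sdiff (hC : TSparse n t C) (hc : c ∈ C \ C')
    (hcC' : c ∈ C'.biUnion (facet n (t + 1))) :
    ∃ d ∈ C' \ C, ∃ k, 1 ≤ k ∧ k ≤ t ∧ d + (k : ZMod n) = c := by
  rw [mem_sdiff] at hc
  obtain ⟨d, hd, k, hk, rfl⟩ := mem_biUnion_facet.1 hcC'
  have hk1 : 1 ≤ k := by
    by_contra! hk0
    obtain rfl : k = 0 := by omega
    simp [hd] at hc
  exact ⟨d, mem_sdiff.2 ⟨hd, fun hdC ↦ hC d hdC k hk1 (by omega) hc.1⟩, k, hk1, by omega, rfl⟩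

end TSparse

open Classical in
/-- The `t`-sparse subsets of `ℤ/nℤ` of cardinality `i`. -/
noncomputable def sparseSets (n t i : ℕ) [NeZero n] : Finset (Finset (ZMod n)) :=
  {C ∈ univ.powersetCard i | TSparse n t C}

theorem mem_sparseSets {i : ℕ} [NeZero n] : C ∈ sparseSets n t i ↔ #C = i ∧ TSparse n t C := by
  simp only [sparseSets, mem_filter, mem_powersetCard_univ]

theorem tSparse_image_add_iff {D : Finset ℕ} (hD : D ⊆ range (n - t)) (y : ZMod n) :
    TSparse n t (D.image fun a : ℕ ↦ y + (a : ZMod n)) ↔ Spaced t D := by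
  have hlt : ∀ a ∈ D, a + t < n := fun a ha ↦ by
    have := mem_range.1 (hD ha)
    omega
  have hadd : ∀ a ∈ D, ∀ k ≤ t,
      (y + (a : ZMod n) + (k : ZMod n) ∈ D.image fun a : ℕ ↦ y + (a : ZMod n)) ↔ a + k ∈ D := by
    intro a ha k hk
    have := hlt a ha
    rw [mem_image]
    constructor
    · rintro ⟨b, hb, h⟩
      have hb' := hlt b hb
      have h' : ((b : ℕ) : ZMod n) = ((a + k : ℕ) : ZMod n) := by
        rw [Nat.cast_add]
        linear_combination h
      rwa [← CharP.natCast_injOn_Iio (ZMod n) n (Set.mem_Iio.2 (by omega))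
        (Set.mem_Iio.2 (by omega)) h']
    · exact fun h ↦ ⟨a + k, h, by push_cast; ring⟩
  constructor
  · intro h a ha b hb hab
    by_contra hba
    refine h _ (mem_image_of_mem _ ha) (b - a) (by omega) (by omega)
      ((hadd a ha (b - a) (by omega)).2 ?_)
    rwa [Nat.add_sub_cancel' hab.le]
  · rintro h _ hc k hk hkt hmem
    obtain ⟨a, ha, rfl⟩ := mem_image.1 hc
    have := h a ha (a + k) ((hadd a ha k hkt).1 hmem) (by omega)
    omega

theorem mem_facet_add_one_add_iff {a : ℕ} (ha : a < n) :
    x ∈ facet n t (x + 1 + (a : ZMod n)) ↔ n ≤ a + t := by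
  have hwrap : ∀ r : ℕ, x + 1 + (a : ZMod n) + (r : ZMod n) = x ↔ n ∣ 1 + a + r := by
    intro r
    rw [← ZMod.natCast_eq_zero_iff, add_assoc, add_assoc, add_eq_left]
    push_cast
    rw [add_assoc]
  simp only [mem_facet, hwrap]
  constructor
  · rintro ⟨r, hr, hdvd⟩
    have := Nat.le_of_dvd (by omega) hdvd
    omega
  · exact fun h ↦ ⟨n - 1 - a, by omega, by rw [show 1 + a + (n - 1 - a) = n by omega]⟩

theorem notMem_facet_iff [NeZero n] :
    x ∉ facet n t c ↔ c ∈ (range (n - t)).image (fun a : ℕ ↦ x + 1 + (a : ZMod n)) := by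
  constructor
  · intro h
    have hc : x + 1 + ((c - (x + 1)).val : ZMod n) = c := by
      rw [ZMod.natCast_zmod_val, add_sub_cancel]
    rw [← hc, mem_facet_add_one_add_iff (ZMod.val_lt _)] at h
    exact mem_image.2 ⟨_, mem_range.2 (by omega), hc⟩
  · intro h
    obtain ⟨a, ha, rfl⟩ := mem_image.1 h
    have := mem_range.1 ha
    rw [mem_facet_add_one_add_iff (by omega)]
    omega

theorem notMem_biUnion_facet_iff [NeZero n] :
    x ∉ C.biUnion (facet n t) ↔
      C ⊆ (range (n - t)).image (fun a : ℕ ↦ x + 1 + (a : ZMod n)) := by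
  simp only [mem_biUnion, not_exists, not_and, notMem_facet_iff, subset_iff]

theorem card_sparseSets_filter_notMem [NeZero n] (htn : t ≤ n) (i : ℕ) (x : ZMod n) :
    #{C ∈ sparseSets n t i | x ∉ C.biUnion (facet n t)} = (n - i * t).choose i := by
  have hinj : Set.InjOn (fun a : ℕ ↦ x + 1 + (a : ZMod n)) (range (n - t)) := fun a ha b hb h ↦
    CharP.natCast_injOn_Iio (ZMod n) n (by grind) (by grind) (add_left_cancel h)
  have himage : {C ∈ sparseSets n t i | x ∉ C.biUnion (facet n t)} =
      (spacedSets t (n - t) i).image (image fun a : ℕ ↦ x + 1 + (a : ZMod n)) := by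
    ext C
    rw [mem_filter, mem_sparseSets, notMem_biUnion_facet_iff, mem_image]
    constructor
    · rintro ⟨⟨hcard, hC⟩, hsub⟩
      obtain ⟨D, hD, rfl⟩ := subset_image_iff.1 hsub
      rw [card_image_of_injOn (hinj.mono hD)] at hcard
      have hsub' : D ⊆ range (n - t) := mod_cast hD
      exact ⟨D, mem_spacedSets.2 ⟨⟨hsub', hcard⟩, (tSparse_image_add_iff hsub' _).1 hC⟩, rfl⟩
    · rintro ⟨D, hD, rfl⟩
      obtain ⟨⟨hsub, hcard⟩, hspaced⟩ := mem_spacedSets.1 hD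
      rw [card_image_of_injOn (hinj.mono (mod_cast hsub))]
      exact ⟨⟨hcard, (tSparse_image_add_iff hsub _).2 hspaced⟩, image_subset_image hsub⟩
  rw [himage, card_image_of_injOn, card_spacedSets, Nat.sub_add_cancel htn]
  exact (image_injOn_powerset_of_injOn hinj).mono fun D hD ↦
    mem_coe.2 (mem_powerset.2 (mem_spacedSets.1 hD).1.1)

theorem sub_mul_card_sparseSets [NeZero n] (htn : t ≤ n) (i : ℕ) :
    (n - i * t) * #(sparseSets n t i) = n * (n - i * t).choose i := by
  have hmissed : ∀ C ∈ sparseSets n t i,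
      #(univ.bipartiteAbove (fun C x ↦ x ∉ C.biUnion (facet n t)) C) = n - i * t := by
    intro C hC
    obtain ⟨rfl, hsparse⟩ := mem_sparseSets.1 hC
    rw [bipartiteAbove, filter_notMem_eq_sdiff, card_univ_sdiff, hsparse.card_biUnion_facet,
      ZMod.card]
  have h := card_mul_eq_card_mul _ hmissed fun x _ ↦ card_sparseSets_filter_notMem htn i x
  rwa [card_univ, ZMod.card, mul_comm] at h

/-- `C` is a sparse set of starting points of facets from which `W` arises: `W` contains the facet
`F(c)` of every `c ∈ C` and nothing else except some of the vertices `c + t`. -/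
structure IsCore (n t : ℕ) (C W : Finset (ZMod n)) : Prop where
  tSparse : TSparse n t C
  biUnion_facet_subset : C.biUnion (facet n t) ⊆ W
  subset_biUnion_facet_succ : W ⊆ C.biUnion (facet n (t + 1))

namespace IsCore

theorem add_natCast_notMem_sdiff (ht : 0 < t) (hC : IsCore n t C W) (hC' : IsCore n t C' W)
    (hx : x ∉ W) (m : ℕ) : x + (m : ZMod n) ∉ C \ C' := by
  induction m using Nat.strong_induction_on generalizing C C' with
  | _ m ih =>
    intro hm
    have hmW : x + (m : ZMod n) ∈ W :=
      hC.biUnion_facet_subset (subset_biUnion_facet ht (mem_sdiff.1 hm).1)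
    obtain ⟨d, hd, k, hk, hkt, hdk⟩ :=
      hC.tSparse.exists_mem_sdiff hm (hC'.subset_biUnion_facet_succ hmW)
    obtain hkm | hmk := le_or_gt k m
    · refine ih (m - k) (by omega) hC' hC ?_
      rwa [Nat.cast_sub hkm, ← add_sub_assoc, ← hdk, add_sub_cancel_right]
    · have hm0 : m ≠ 0 := by
        rintro rfl
        exact hx (by simpa using hmW)
      refine hx (hC'.biUnion_facet_subset
        (mem_biUnion_facet.2 ⟨d, (mem_sdiff.1 hd).1, k - m, by omega, ?_⟩))
      rw [Nat.cast_sub hmk.le, ← add_sub_assoc, hdk, add_sub_cancel_right]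

theorem subset [NeZero n] (ht : 0 < t) (hC : IsCore n t C W) (hC' : IsCore n t C' W)
    (hW : W ≠ univ) : C ⊆ C' := by
  obtain ⟨x, hx⟩ : ∃ x, x ∉ W := by simpa [eq_univ_iff_forall] using hW
  intro c hc
  by_contra hcC'
  refine add_natCast_notMem_sdiff ht hC hC' hx (c - x).val ?_
  rw [ZMod.natCast_zmod_val, add_sub_cancel]
  exact mem_sdiff.2 ⟨hc, hcC'⟩

theorem unique [NeZero n] (ht : 0 < t) (hC : IsCore n t C W) (hC' : IsCore n t C' W)
    (hW : W ≠ univ) : C = C' :=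
  (hC.subset ht hC' hW).antisymm (hC'.subset ht hC hW)

end IsCore

/-- The sets `W = (⋃_{c ∈ C} F(c)) ∪ A` with `A ⊆ {c + t : c ∈ C}` and `|A| = j`, for fixed `C`. -/
def extensions (n t j : ℕ) (C : Finset (ZMod n)) : Finset (Finset (ZMod n)) :=
  ((C.image (· + (t : ZMod n))).powersetCard j).image (C.biUnion (facet n t) ∪ ·)

theorem mem_extensions {j : ℕ} :
    W ∈ extensions n t j C ↔
      ∃ A ⊆ C.image (· + (t : ZMod n)), #A = j ∧ C.biUnion (facet n t) ∪ A = W := by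
  simp only [extensions, mem_image, mem_powersetCard, and_assoc]

namespace TSparse

theorem card_extensions (hC : TSparse n t C) (j : ℕ) :
    #(extensions n t j C) = (#C).choose j := by
  rw [extensions, card_image_of_injOn, card_powersetCard,
    card_image_of_injective _ (add_left_injective _)]
  intro A hA B hB h
  have hdisj : ∀ A ∈ (C.image (· + (t : ZMod n))).powersetCard j,
      Disjoint (C.biUnion (facet n t)) A := fun A hA ↦
    hC.disjoint_biUnion_facet_image_add.mono_right (mem_powersetCard.1 hA).1
  dsimp only at h
  rw [← union_sdiff_cancel_left (hdisj A hA), h, union_sdiff_cancel_left (hdisj B hB)]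

theorem isCore_of_mem_extensions {j : ℕ} (hC : TSparse n t C) (hW : W ∈ extensions n t j C) :
    IsCore n t C W := by
  obtain ⟨A, hA, -, rfl⟩ := mem_extensions.1 hW
  exact ⟨hC, subset_union_left, biUnion_facet_succ (C := C) ▸ union_subset_union_right hA⟩

theorem card_le_of_mem_extensions {j : ℕ} (hC : TSparse n t C) (hW : W ∈ extensions n t j C) :
    #W ≤ #C * t + j := by
  obtain ⟨A, -, rfl, rfl⟩ := mem_extensions.1 hW
  exact (card_union_le _ _).trans_eq (by rw [hC.card_biUnion_facet])

end TSparse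

theorem card_biUnion_extensions [NeZero n] {i j : ℕ} (ht : 0 < t) (hij : t * i + j < n) :
    #((sparseSets n t i).biUnion (extensions n t j)) = #(sparseSets n t i) * i.choose j := by
  rw [card_biUnion]
  · refine sum_const_nat fun C hC ↦ ?_
    obtain ⟨rfl, hsparse⟩ := mem_sparseSets.1 hC
    exact hsparse.card_extensions j
  · intro C hC C' hC' hne
    obtain ⟨rfl, hsparse⟩ := mem_sparseSets.1 hC
    obtain ⟨-, hsparse'⟩ := mem_sparseSets.1 hC'
    refine disjoint_left.2 fun W hW hW' ↦ hne ?_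
    have hproper : W ≠ univ := by
      rintro rfl
      have := hsparse.card_le_of_mem_extensions hW
      rw [card_univ, ZMod.card, mul_comm] at this
      omega
    exact (hsparse.isCore_of_mem_extensions hW).unique ht (hsparse'.isCore_of_mem_extensions hW')
      hproper

end SparseSets

/-- Theorem 4.10(i) in combinatorial form: the number `|𝒲|` of vertex sets of
`(i+j, t·i+j)`-eligible subcollections of `Δ_t(C_n)` — i.e. sets
`W = (⋃_{c ∈ C} F(c)) ∪ A` for a `t`-sparse `C` with `|C| = i` and
`A ⊆ {c + t : c ∈ C}` with `|A| = j` — satisfies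
`(n - i·t)·|𝒲| = n·C(i, j)·C(n - i·t, i)`. -/
theorem stmt_9 (n t i j : ℕ) (ht : 2 ≤ t) (htn : t < n) (hi : 1 ≤ i)
    (hij : t * i + j < n) :
    (n - i * t) *
        {W : Finset (ZMod n) | ∃ C A : Finset (ZMod n),
          TSparse n t C ∧ C.card = i ∧
          A ⊆ C.image (fun c => c + (t : ZMod n)) ∧ A.card = j ∧
          W = C.biUnion (facet n t) ∪ A}.ncard
      = n * (i.choose j) * ((n - i * t).choose i) := by
  have : NeZero n := ⟨by omega⟩
  have hfamily : {W : Finset (ZMod n) | ∃ C A : Finset (ZMod n),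
      TSparse n t C ∧ C.card = i ∧
      A ⊆ C.image (fun c => c + (t : ZMod n)) ∧ A.card = j ∧
      W = C.biUnion (facet n t) ∪ A} = ↑((sparseSets n t i).biUnion (extensions n t j)) := by
    ext W
    simp only [Set.mem_ofPred_eq, Finset.mem_coe, Finset.mem_biUnion, mem_sparseSets,
      mem_extensions]
    grind
  rw [hfamily, Set.ncard_coe_finset, card_biUnion_extensions (by omega) hij, ← mul_assoc,
    sub_mul_card_sparseSets htn.le, mul_right_comm]
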